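/- Let n ≥ 1, let f(x) ∈ 𝔽₂[x] divide xⁿ−1, and let p(x) ∈ 𝔽₂[x] satisfy gcd(p(x), xⁿ−1) = 1, so the image of p in R = 𝔽₂[x]/(xⁿ−1) is a unit with inverse p⁻¹. Let h(x) = (xⁿ−1)/f(x) and let d be the minimum weight of a nonzero element of the ideal of R generated by h (the cyclic code generated by h). Suppose r, s ∈ 𝔽₂[x] satisfy r + p·s ≡ h (mod xⁿ−1) and r', s' ∈ 𝔽₂[x] satisfy r' + p⁻¹·s' ≡ h (mod xⁿ−1). Set m = max{wt(p), wt(p⁻¹)}, and let m' denote either max{wt(r), wt(s)} or max{wt(r'), wt(s')} (the conclusion holds for both choices). Then, with a = f and b = p·f (images in R), every (u,v) ∈ C₁(a,b) \ C₂(a,b) satisfies wt(u) + wt(v) ≥ min{ (wt(p)+wt(p⁻¹))·d / (m + wt(p)·wt(p⁻¹)), d/m' } as rational numbers; in particular d_GB(a,b) is at least this minimum. -/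

import Mathlib

open Polynomial

noncomputable section

/-- `R2 n` is the ring `𝔽₂[x]/(xⁿ − 1)`. -/
abbrev R2 (n : ℕ) : Type := AdjoinRoot (X ^ n - 1 : (ZMod 2)[X])

/-- The image of `x` in `𝔽₂[x]/(xⁿ − 1)`. -/
def xR (n : ℕ) : R2 n := AdjoinRoot.root _

/-- The quotient map `𝔽₂[x] → 𝔽₂[x]/(xⁿ − 1)`. -/
def mkR (n : ℕ) : (ZMod 2)[X] →+* R2 n := AdjoinRoot.mk _

lemma xR_pow_n (n : ℕ) : xR n ^ n = 1 := by
  have h : (AdjoinRoot.mk (X ^ n - 1 : (ZMod 2)[X])) (X ^ n - 1) = 0 := AdjoinRoot.mk_self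
  rw [map_sub, map_pow, AdjoinRoot.mk_X, map_one, sub_eq_zero] at h
  exact h

/-- The unique representative of degree `< n` of an element of `𝔽₂[x]/(xⁿ − 1)` (junk if `n = 0`). -/
def repP {n : ℕ} (u : R2 n) : (ZMod 2)[X] :=
  if h : n = 0 then 0
  else AdjoinRoot.modByMonicHom (by simpa using monic_X_pow_sub_C (1 : ZMod 2) h) u

/-- The Hamming weight of an element of `𝔽₂[x]/(xⁿ − 1)`: the number of nonzero coefficients
of its degree-`< n` representative. -/
def wt {n : ℕ} (u : R2 n) : ℕ := (repP u).support.card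

/-- Coefficient of the degree-`< n` representative, indexed by `ℤ/n`. -/
def coeffZ {n : ℕ} (u : R2 n) (i : ZMod n) : ZMod 2 := (repP u).coeff i.val

/-- The X-stabilizer space `C₂(a,b) = {(r·a, r·b) : r ∈ R}` of the GB code of `(a,b)`. -/
def C2set (n : ℕ) (a b : R2 n) : Set (R2 n × R2 n) := {p | ∃ r : R2 n, p = (r * a, r * b)}

/-- The space `C₁(a,b) = {(u,v) : u·b + v·a = 0}` of the GB code of `(a,b)`. -/
def C1set (n : ℕ) (a b : R2 n) : Set (R2 n × R2 n) := {p | p.1 * b + p.2 * a = 0}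

/-- The (X-side) minimum distance of the GB code of `(a,b)`. -/
def dGB (n : ℕ) (a b : R2 n) : ℕ :=
  sInf {k | ∃ p ∈ C1set n a b \ C2set n a b, wt p.1 + wt p.2 = k}

/-- `P_m(x) = 1 + x + ⋯ + x^{m−1}` as a polynomial over `𝔽₂`. -/
def PmP (m : ℕ) : (ZMod 2)[X] := ∑ i ∈ Finset.range m, X ^ i

/-- `P_m(x) = 1 + x + ⋯ + x^{m−1}` as an element of `𝔽₂[x]/(xⁿ − 1)`. -/
def PmR (n m : ℕ) : R2 n := ∑ i ∈ Finset.range m, xR n ^ i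

/-- The ring endomorphism of `𝔽₂[x]/(xⁿ − 1)` induced by `x ↦ x^d`. -/
def substHom (n d : ℕ) : R2 n →+* R2 n :=
  AdjoinRoot.lift (algebraMap (ZMod 2) (R2 n)) (xR n ^ d) (by
    simp only [eval₂_sub, eval₂_X_pow, eval₂_one]
    rw [← pow_mul, mul_comm d n, pow_mul, xR_pow_n, one_pow, sub_self])

/-- The Euclidean inner product on `𝔽₂²ⁿ`, in terms of pairs `(u₁, u₂)` of elements of
`𝔽₂[x]/(xⁿ − 1)` (representing the concatenated binary vector `(u₁ | u₂)`). -/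
def eucInner (n : ℕ) (p q : R2 n × R2 n) : ZMod 2 :=
  ∑ i ∈ Finset.range n,
    ((repP p.1).coeff i * (repP q.1).coeff i + (repP p.2).coeff i * (repP q.2).coeff i)

/-- The symplectic inner product of `u₁ + w·u₂` and `v₁ + w·v₂`, i.e.
`Σᵢ (u₁ᵢ·v₂ᵢ + u₂ᵢ·v₁ᵢ)`, in terms of the pairs `(u₁,u₂)`, `(v₁,v₂)`. -/
def sympInner (n : ℕ) (p q : R2 n × R2 n) : ZMod 2 :=
  ∑ i ∈ Finset.range n,
    ((repP p.1).coeff i * (repP q.2).coeff i + (repP p.2).coeff i * (repP q.1).coeff i)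

/-- Euclidean dual of a set of (pairs representing) binary vectors of length `2n`. -/
def eucDual (n : ℕ) (S : Set (R2 n × R2 n)) : Set (R2 n × R2 n) :=
  {p | ∀ q ∈ S, eucInner n q p = 0}

/-- Symplectic dual of a set of (pairs representing) vectors of `𝔽₄ⁿ`. -/
def sympDual (n : ℕ) (S : Set (R2 n × R2 n)) : Set (R2 n × R2 n) :=
  {p | ∀ q ∈ S, sympInner n q p = 0}

/-- Number of nonzero `𝔽₄`-coordinates of `u₁ + w·u₂`, in terms of the pair `(u₁,u₂)`. -/
def wt4 (n : ℕ) (p : R2 n × R2 n) : ℕ := ((repP p.1).support ∪ (repP p.2).support).card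

/-- The `2n` binary coordinates of a pair `(u₁,u₂)`. -/
def coords {n : ℕ} (p : R2 n × R2 n) : (Fin n ⊕ Fin n) → ZMod 2 :=
  Sum.elim (fun i => (repP p.1).coeff i) (fun i => (repP p.2).coeff i)

/-- Vertex set of the Tanner graph: check vertices `x_t` (left) and data vertices
`q_s`, `q'_s` (right). -/
def TV (n : ℕ) : Type := (ZMod n) ⊕ ((ZMod n) ⊕ (ZMod n))

/-- `trel a b v w` holds iff `v` is a check vertex `x_t`, `w` is a data vertex, and they are
connected: `x_t ~ q_s` iff `a_{s−t} = 1`, and `x_t ~ q'_s` iff `b_{s−t} = 1`. -/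
def trel {n : ℕ} (a b : R2 n) (v w : TV n) : Prop :=
  ∃ t s : ZMod n, v = Sum.inl t ∧
    ((w = Sum.inr (Sum.inl s) ∧ coeffZ a (s - t) = 1) ∨
     (w = Sum.inr (Sum.inr s) ∧ coeffZ b (s - t) = 1))

/-- The Tanner graph `T(a,b)` of the GB code of `(a,b)`. -/
def tanner (n : ℕ) (a b : R2 n) : SimpleGraph (TV n) where
  Adj v w := trel a b v w ∨ trel a b w v
  symm := ⟨fun v w h => Or.symm h⟩
  loopless := by
    constructor
    rintro v (⟨t, s, hv, hw⟩ | ⟨t, s, hv, hw⟩) <;>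
      rcases hw with ⟨hw, -⟩ | ⟨hw, -⟩ <;> (subst hv; simp at hw)

end

noncomputable section

/-- A monomial has weight at most one. -/
lemma wt_mkR_monomial_le {n : ℕ} (hn : 0 < n) (i : ℕ) (c : ZMod 2) :
    wt (mkR n (C c * X ^ i)) ≤ 1 := by
  have hmonic : (X ^ n - 1 : (ZMod 2)[X]).Monic := by
    simpa using monic_X_pow_sub_C (1 : ZMod 2) hn.ne'
  have hred : mkR n (C c * X ^ i) = mkR n (C c * X ^ (i % n)) := by
    have hX : mkR n X ^ n = 1 := xR_pow_n n
    conv_lhs => rw [← Nat.mod_add_div i n]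
    simp only [map_mul, map_pow, pow_add, pow_mul, hX, one_pow, mul_one]
  have hdeg : (C c * X ^ (i % n) : (ZMod 2)[X]).degree < (X ^ n - 1 : (ZMod 2)[X]).degree := by
    have hdn : (X ^ n - 1 : (ZMod 2)[X]).degree = n := by
      simpa using degree_X_pow_sub_C hn (1 : ZMod 2)
    rw [hdn]
    exact (degree_C_mul_X_pow_le _ _).trans_lt (by exact_mod_cast Nat.mod_lt i hn)
  have hrep : repP (mkR n (C c * X ^ i)) = C c * X ^ (i % n) := by
    rw [hred]
    simp only [repP, hn.ne', dite_false, mkR, AdjoinRoot.modByMonicHom_mk]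
    exact (modByMonic_eq_self_iff hmonic).2 hdeg
  rw [wt, hrep]
  exact card_support_C_mul_X_pow_le_one

lemma repP_add {n : ℕ} (u v : R2 n) : repP (u + v) = repP u + repP v := by
  unfold repP
  split_ifs <;> simp

lemma mkR_repP {n : ℕ} (hn : 0 < n) (u : R2 n) : mkR n (repP u) = u := by
  simp only [repP, hn.ne', dite_false]
  exact AdjoinRoot.mk_leftInverse _ u

lemma wt_zero {n : ℕ} : wt (0 : R2 n) = 0 := by
  have h : repP (0 : R2 n) = 0 := by
    unfold repP
    split_ifs <;> simp
  simp [wt, h]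

lemma wt_add_le {n : ℕ} (u v : R2 n) : wt (u + v) ≤ wt u + wt v := by
  rw [wt, repP_add]
  exact (Finset.card_le_card support_add).trans (Finset.card_union_le _ _)

lemma wt_sum_le {n : ℕ} {ι : Type*} (t : Finset ι) (g : ι → R2 n) :
    wt (∑ i ∈ t, g i) ≤ ∑ i ∈ t, wt (g i) :=
  Finset.le_sum_of_subadditive wt wt_zero.le wt_add_le t g

/-- Weight is submultiplicative. -/
lemma wt_mul_le {n : ℕ} (hn : 0 < n) (u v : R2 n) : wt (u * v) ≤ wt u * wt v := by
  have hexp : u * v = ∑ i ∈ (repP u).support, ∑ j ∈ (repP v).support,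
      mkR n (C ((repP u).coeff i * (repP v).coeff j) * X ^ (i + j)) := by
    conv_lhs => rw [← mkR_repP hn u, ← mkR_repP hn v, (repP u).as_sum_support_C_mul_X_pow,
      (repP v).as_sum_support_C_mul_X_pow]
    rw [map_sum, map_sum, Finset.sum_mul_sum]
    refine Finset.sum_congr rfl fun i _ => Finset.sum_congr rfl fun j _ => ?_
    rw [← map_mul, C_mul, pow_add]
    congr 1
    ring
  rw [hexp]
  calc _ ≤ ∑ i ∈ (repP u).support, ∑ j ∈ (repP v).support, 1 :=
        (wt_sum_le _ _).trans <| Finset.sum_le_sum fun i _ => (wt_sum_le _ _).trans <|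
          Finset.sum_le_sum fun j _ => wt_mkR_monomial_le hn _ _
    _ = wt u * wt v := by simp [wt]

/-- If `f * h = xⁿ - 1`, the annihilator of `f` in `𝔽₂[x]/(xⁿ − 1)` is generated by `h`. -/
lemma mem_span_of_mul_eq_zero {n : ℕ} (hn : 0 < n) {f h : (ZMod 2)[X]}
    (hh : f * h = X ^ n - 1) {c : R2 n} (hc : c * mkR n f = 0) : ∃ q, c = q * mkR n h := by
  have hne : (X ^ n - 1 : (ZMod 2)[X]) ≠ 0 := by
    simpa using X_pow_sub_C_ne_zero hn (1 : ZMod 2)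
  obtain ⟨c, rfl⟩ := AdjoinRoot.mk_surjective c
  have hdvd : (X ^ n - 1 : (ZMod 2)[X]) ∣ c * f := by
    rw [← AdjoinRoot.mk_eq_zero, map_mul]
    exact hc
  rw [← hh, mul_comm c] at hdvd
  have hf : f ≠ 0 := by
    rintro rfl
    exact hne (by rw [← hh, zero_mul])
  obtain ⟨q, rfl⟩ := (mul_dvd_mul_iff_left hf).1 hdvd
  exact ⟨mkR n q, by rw [← map_mul, mul_comm q]; rfl⟩

lemma add_self_R2 {n : ℕ} (u : R2 n) : u + u = 0 := by
  have h2 : (2 : R2 n) = 0 := by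
    rw [← map_ofNat (algebraMap (ZMod 2) (R2 n)) 2, show (OfNat.ofNat 2 : ZMod 2) = 0 from rfl,
      map_zero]
  rw [← two_mul, h2, zero_mul]

/-- A splitting `h = r + p * s` bounds the weight of `u * h` by a multiple of the weight of
`(u, u * p)`. -/
lemma le_max_wt_mul {n d : ℕ} (hn : 0 < n) {p h r s u v : R2 n} (hrs : r + p * s = h)
    (huv : v = u * p) (hd : d ≤ wt (u * h)) : d ≤ max (wt r) (wt s) * (wt u + wt v) := by
  have hsplit : u * h = u * r + v * s := by
    rw [← hrs, huv]
    ring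
  rw [hsplit] at hd
  calc d ≤ wt u * wt r + wt v * wt s :=
        hd.trans <| (wt_add_le _ _).trans <| add_le_add (wt_mul_le hn _ _) (wt_mul_le hn _ _)
    _ ≤ wt u * max (wt r) (wt s) + wt v * max (wt r) (wt s) := by
        gcongr
        · exact le_max_left _ _
        · exact le_max_right _ _
    _ = _ := by ring

/-- Lower bound on the minimum distance of the GB code of
`(f, p·f)`, where `f ∣ xⁿ−1`, `gcd(p, xⁿ−1) = 1` with `p⁻¹ = pinv` in `R`,
`h = (xⁿ−1)/f`, `d` is the minimum weight of a nonzero element of the cyclic code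
generated by `h`, `r + p·s ≡ h` and `r' + p⁻¹·s' ≡ h (mod xⁿ−1)`,
`m = max{wt(p), wt(p⁻¹)}`, and `m'` is either `max{wt(r), wt(s)}` or
`max{wt(r'), wt(s')}`:  every `(u,v) ∈ C₁ \ C₂` satisfies
`wt(u) + wt(v) ≥ min{(wt(p)+wt(p⁻¹))·d / (m + wt(p)·wt(p⁻¹)), d/m'}` as rationals;
in particular `d_GB(f, p·f)` is at least this minimum. -/
theorem stmt_4 (n : ℕ) (hn : 0 < n) (f p h : (ZMod 2)[X])
    (hf : f ∣ (X ^ n - 1 : (ZMod 2)[X]))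
    (hp : EuclideanDomain.gcd p (X ^ n - 1 : (ZMod 2)[X]) = 1)
    (pinv : R2 n) (hpinv : mkR n p * pinv = 1)
    (hh : f * h = X ^ n - 1)
    (d : ℕ) (hd : d = sInf {k | ∃ c ∈ Ideal.span {mkR n h}, c ≠ 0 ∧ wt c = k})
    (r s r' s' : (ZMod 2)[X])
    (hrs : mkR n r + mkR n p * mkR n s = mkR n h)
    (hrs' : mkR n r' + pinv * mkR n s' = mkR n h)
    (m m' : ℕ)
    (hm : m = max (wt (mkR n p)) (wt pinv))
    (hm' : m' = max (wt (mkR n r)) (wt (mkR n s)) ∨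
           m' = max (wt (mkR n r')) (wt (mkR n s')))
    (a b : R2 n) (ha : a = mkR n f) (hb : b = mkR n (p * f)) :
    (∀ u v : R2 n, (u, v) ∈ C1set n a b \ C2set n a b →
      min ((((wt (mkR n p) + wt pinv) * d : ℕ) : ℚ) / ((m + wt (mkR n p) * wt pinv : ℕ) : ℚ))
          ((d : ℚ) / (m' : ℚ)) ≤ ((wt u + wt v : ℕ) : ℚ)) ∧
    min ((((wt (mkR n p) + wt pinv) * d : ℕ) : ℚ) / ((m + wt (mkR n p) * wt pinv : ℕ) : ℚ))
        ((d : ℚ) / (m' : ℚ)) ≤ (dGB n a b : ℚ) := by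
  have hmin : ∀ q, q * mkR n h ≠ 0 → d ≤ wt (q * mkR n h) := fun q hq => by
    rw [hd]
    exact Nat.sInf_le ⟨_, Ideal.mem_span_singleton'.2 ⟨q, rfl⟩, hq, rfl⟩
  have hfh : mkR n f * mkR n h = 0 := by
    rw [← map_mul, hh]
    exact AdjoinRoot.mk_self
  have main : ∀ u v : R2 n, (u, v) ∈ C1set n a b \ C2set n a b →
      min ((((wt (mkR n p) + wt pinv) * d : ℕ) : ℚ) / ((m + wt (mkR n p) * wt pinv : ℕ) : ℚ))
          ((d : ℚ) / (m' : ℚ)) ≤ ((wt u + wt v : ℕ) : ℚ) := by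
    rintro u v ⟨hC1, hC2⟩
    have hann : (u * mkR n p + v) * mkR n f = 0 := by
      have h1 : u * b + v * a = 0 := hC1
      rw [ha, hb, map_mul] at h1
      rw [← h1]
      ring
    by_cases hc : u * mkR n p + v = 0
    · have hv : v = u * mkR n p := by
        rw [← sub_eq_zero]
        linear_combination hc - add_self_R2 (u * mkR n p)
      have hu : u = v * pinv := by
        rw [hv, mul_assoc, hpinv, mul_one]
      have huh : u * mkR n h ≠ 0 := fun h0 => by
        obtain ⟨q, hq⟩ := mem_span_of_mul_eq_zero hn ((mul_comm h f).trans hh) h0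
        refine hC2 ⟨q, ?_⟩
        rw [hv, hq, ha, hb, map_mul]
        ring_nf
      have hvh : v * mkR n h ≠ 0 := fun h0 => huh <| by
        rw [hu]
        linear_combination pinv * h0
      refine (min_le_right _ _).trans (div_le_of_le_mul₀ (by positivity) (by positivity) ?_)
      have hle : d ≤ (wt u + wt v) * m' := by
        rcases hm' with rfl | rfl
        · rw [mul_comm]
          exact le_max_wt_mul hn hrs hv (hmin u huh)
        · rw [mul_comm, add_comm (wt u)]
          exact le_max_wt_mul hn hrs' hu (hmin v hvh)
      exact_mod_cast hle
    · obtain ⟨q, hq⟩ := mem_span_of_mul_eq_zero hn hh hann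
      have hd1 : d ≤ wt u * wt (mkR n p) + wt v := by
        have h1 := hmin q (hq ▸ hc)
        rw [← hq] at h1
        exact h1.trans ((wt_add_le _ _).trans (by gcongr; exact wt_mul_le hn _ _))
      have hd2 : d ≤ wt u + wt v * wt pinv := by
        have hq' : u + v * pinv = pinv * q * mkR n h := by
          linear_combination pinv * hq - u * hpinv
        have hne : pinv * q * mkR n h ≠ 0 := fun h0 => hc <| by
          rw [hq]
          linear_combination mkR n p * h0 - q * mkR n h * hpinv
        have h1 := hmin _ hne
        rw [← hq'] at h1
        exact h1.trans ((wt_add_le _ _).trans (by gcongr; exact wt_mul_le hn _ _))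
      refine (min_le_left _ _).trans (div_le_of_le_mul₀ (by positivity) (by positivity) ?_)
      have hpm : wt (mkR n p) ≤ m := hm ▸ le_max_left _ _
      have him : wt pinv ≤ m := hm ▸ le_max_right _ _
      have hle : (wt (mkR n p) + wt pinv) * d ≤
          (wt u + wt v) * (m + wt (mkR n p) * wt pinv) := by
        calc (wt (mkR n p) + wt pinv) * d = wt (mkR n p) * d + wt pinv * d := by ring
          _ ≤ wt (mkR n p) * (wt u + wt v * wt pinv) +
              wt pinv * (wt u * wt (mkR n p) + wt v) := by gcongr
          _ = wt u * (wt (mkR n p) + wt (mkR n p) * wt pinv) +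
              wt v * (wt pinv + wt (mkR n p) * wt pinv) := by ring
          _ ≤ wt u * (m + wt (mkR n p) * wt pinv) +
              wt v * (m + wt (mkR n p) * wt pinv) := by gcongr
          _ = _ := by ring
      exact_mod_cast hle
  refine ⟨main, ?_⟩
  by_cases hne : {k | ∃ q ∈ C1set n a b \ C2set n a b, wt q.1 + wt q.2 = k}.Nonempty
  · obtain ⟨⟨u, v⟩, huv, hk⟩ := Nat.sInf_mem hne
    rw [dGB, ← hk]
    exact main u v huv
  · have hh0 : mkR n h = 0 := by
      by_contra hh0
      refine hne ⟨_, (0, mkR n h), ⟨?_, ?_⟩, rfl⟩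
      · change 0 * b + mkR n h * a = 0
        rw [ha, zero_mul, zero_add, mul_comm, hfh]
      · rintro ⟨q, hq⟩
        obtain ⟨h1, h2⟩ := Prod.mk.inj hq
        refine hh0 ?_
        rw [h2, hb, map_mul]
        rw [ha] at h1
        linear_combination -mkR n p * h1
    have hd0 : d = 0 := by
      rw [hd, Nat.sInf_eq_zero]
      right
      ext k
      simp [hh0]
    simp [hd0]

end
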